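/- For every fixed d ≥ 0, the number of permutations of {1,…,n} with exactly d kinks is asymptotically equivalent, as n → ∞, to 2^{n−2d−1}·(d+1)^n; that is, the limit of #F_n^d / (2^{n−2d−1}(d+1)^n) as n → ∞ equals 1. -/

import Mathlib

open scoped Classical

noncomputable def numKinks {n : ℕ} (π : Equiv.Perm (Fin n)) : ℕ :=
  (Finset.univ.filter (fun i : Fin n =>
    0 < (i : ℕ) ∧ ∀ j : Fin n, (j : ℕ) < (i : ℕ) →
      (π j : ℕ) + 1 ≠ (π i : ℕ) ∧ (π i : ℕ) + 1 ≠ (π j : ℕ))).card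

noncomputable def F (n d : ℕ) : ℕ :=
  (Finset.univ.filter (fun π : Equiv.Perm (Fin n) => numKinks π = d)).card

def KL {n : ℕ} (π : Equiv.Perm (Fin n)) (i : Fin n) : Prop :=
  ∃ j : Fin n, j < i ∧ (π j : ℕ) + 1 = (π i : ℕ)

def KR {n : ℕ} (π : Equiv.Perm (Fin n)) (i : Fin n) : Prop :=
  ∃ j : Fin n, j < i ∧ (π i : ℕ) + 1 = (π j : ℕ)

theorem numKinks_succ {m : ℕ} (π : Equiv.Perm (Fin (m+1))) :
    numKinks π + 1 = ∑ i : Fin (m+1), if ¬ KL π i ∧ ¬ KR π i then 1 else 0 := by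
  have h0 : ¬ KL π 0 ∧ ¬ KR π 0 := by
    constructor <;> rintro ⟨j, hj, -⟩ <;> exact absurd hj (Fin.not_lt_zero j)
  unfold numKinks
  rw [Finset.card_filter, Fin.sum_univ_succ, Fin.sum_univ_succ, if_pos h0, if_neg (by simp), zero_add,
    add_comm]
  congr 1
  apply Finset.sum_congr rfl
  intro i _
  congr 1
  apply propext
  simp only [KL, KR, Fin.lt_def]
  constructor
  · rintro ⟨_, h⟩
    exact ⟨fun ⟨j, hj, e⟩ => (h j hj).1 e, fun ⟨j, hj, e⟩ => (h j hj).2 e⟩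
  · rintro ⟨h1, h2⟩
    exact ⟨by simp, fun j hj => ⟨fun e => h1 ⟨j, hj, e⟩, fun e => h2 ⟨j, hj, e⟩⟩⟩

theorem card_KL_KR {m : ℕ} (π : Equiv.Perm (Fin (m+1))) :
    (∑ i : Fin (m+1), if KL π i then 1 else 0) + (∑ i : Fin (m+1), if KR π i then 1 else 0) = m := by
  have e1 : (∑ i : Fin (m+1), if KL π i then 1 else 0)
      = ∑ v : Fin m, if KL π (π.symm v.succ) then 1 else 0 := by
    rw [← Equiv.sum_comp π.symm, Fin.sum_univ_succ, if_neg, zero_add]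
    rintro ⟨j, hj, e⟩
    simp at e
  have e2 : (∑ i : Fin (m+1), if KR π i then 1 else 0)
      = ∑ v : Fin m, if KR π (π.symm v.castSucc) then 1 else 0 := by
    rw [← Equiv.sum_comp π.symm, Fin.sum_univ_castSucc, if_neg, add_zero]
    rintro ⟨j, hj, e⟩
    have := (π j).isLt
    simp at e
    omega
  rw [e1, e2, ← Finset.sum_add_distrib]
  have : ∀ v : Fin m, ((if KL π (π.symm v.succ) then 1 else 0)
      + (if KR π (π.symm v.castSucc) then 1 else 0)) = 1 := by
    intro v
    have a1 : KL π (π.symm v.succ) ↔ π.symm v.castSucc < π.symm v.succ := by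
      constructor
      · rintro ⟨j, hj, e⟩
        have : π j = v.castSucc := by
          apply Fin.ext; simp at e; simpa using e
        rw [← this]; simpa using hj
      · intro h
        exact ⟨_, h, by simp⟩
    have a2 : KR π (π.symm v.castSucc) ↔ π.symm v.succ < π.symm v.castSucc := by
      constructor
      · rintro ⟨j, hj, e⟩
        have : π j = v.succ := by
          apply Fin.ext; simp at e; simp [e]
        rw [← this]; simpa using hj
      · intro h
        exact ⟨_, h, by simp⟩
    have a3 : π.symm v.castSucc ≠ π.symm v.succ := by
      intro h
      have := congrArg Fin.val (π.symm.injective h)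
      simp at this
    rw [a1, a2]
    rcases lt_or_gt_of_ne a3 with h | h
    · rw [if_pos h, if_neg (not_lt_of_gt h)]
    · rw [if_pos h, if_neg (not_lt_of_gt h)]
  rw [Finset.sum_congr rfl (fun v _ => this v)]
  simp

/-- Append the value `p` at the end of the permutation, shifting the other values. -/
def kins {n : ℕ} (p : Fin (n+1)) (π : Equiv.Perm (Fin n)) : Equiv.Perm (Fin (n+1)) :=
  ((finSuccEquiv' (Fin.last n)).trans (Equiv.optionCongr π)).trans (finSuccEquiv' p).symm

theorem kins_last {n : ℕ} (p : Fin (n+1)) (π : Equiv.Perm (Fin n)) : kins p π (Fin.last n) = p := by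
  simp [kins]

theorem kins_castSucc {n : ℕ} (p : Fin (n+1)) (π : Equiv.Perm (Fin n)) (i : Fin n) :
    kins p π i.castSucc = p.succAbove (π i) := by
  have : finSuccEquiv' (Fin.last n) i.castSucc = some i := by
    rw [← Fin.succAbove_last_apply, finSuccEquiv'_succAbove]
  simp [kins, this]

theorem kins_bij (n : ℕ) :
    Function.Bijective (fun x : Fin (n+1) × Equiv.Perm (Fin n) => kins x.1 x.2) := by
  rw [Fintype.bijective_iff_injective_and_card]
  constructor
  · rintro ⟨p, π⟩ ⟨q, ρ⟩ h
    simp only at h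
    have h1 : p = q := by rw [← kins_last p π, h, kins_last]
    subst h1
    congr 1
    ext i
    have := DFunLike.congr_fun h i.castSucc
    rw [kins_castSucc, kins_castSucc] at this
    rw [Fin.succAbove_right_injective this]
  · simp [Fintype.card_perm, Nat.factorial_succ]

theorem succAbove_adj {n : ℕ} (p : Fin (n+1)) (a b : Fin n) :
    ((p.succAbove a : ℕ) + 1 = p.succAbove b) ↔ ((a : ℕ) + 1 = b ∧ (p : ℕ) ≠ b) := by
  simp only [Fin.succAbove, Fin.lt_def]
  have := p.isLt
  split_ifs <;> simp_all <;> omega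

theorem KL_kins {n : ℕ} (p : Fin (n+1)) (π : Equiv.Perm (Fin n)) (i : Fin n) :
    KL (kins p π) i.castSucc ↔ KL π i ∧ (p : ℕ) ≠ π i := by
  constructor
  · rintro ⟨j, hj, e⟩
    have : (j : ℕ) < n := by have := i.isLt; simp [Fin.lt_def] at hj; omega
    obtain ⟨j, rfl⟩ : ∃ k : Fin n, j = k.castSucc := ⟨⟨j, this⟩, rfl⟩
    rw [kins_castSucc, kins_castSucc, succAbove_adj] at e
    exact ⟨⟨j, by simpa using hj, e.1⟩, e.2⟩
  · rintro ⟨⟨j, hj, e⟩, h⟩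
    refine ⟨j.castSucc, by simpa using hj, ?_⟩
    rw [kins_castSucc, kins_castSucc, succAbove_adj]
    exact ⟨e, h⟩

theorem KR_kins {n : ℕ} (p : Fin (n+1)) (π : Equiv.Perm (Fin n)) (i : Fin n) :
    KR (kins p π) i.castSucc ↔ KR π i ∧ (p : ℕ) ≠ π i + 1 := by
  constructor
  · rintro ⟨j, hj, e⟩
    have : (j : ℕ) < n := by have := i.isLt; simp [Fin.lt_def] at hj; omega
    obtain ⟨j, rfl⟩ : ∃ k : Fin n, j = k.castSucc := ⟨⟨j, this⟩, rfl⟩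
    rw [kins_castSucc, kins_castSucc, succAbove_adj] at e
    exact ⟨⟨j, by simpa using hj, e.1⟩, by rw [e.1]; exact e.2⟩
  · rintro ⟨⟨j, hj, e⟩, h⟩
    refine ⟨j.castSucc, by simpa using hj, ?_⟩
    rw [kins_castSucc, kins_castSucc, succAbove_adj]
    exact ⟨e, by rw [← e]; exact h⟩

theorem last_not_kink {m : ℕ} (π : Equiv.Perm (Fin (m+2))) :
    ¬ (¬ KL π (Fin.last _) ∧ ¬ KR π (Fin.last _)) := by
  rintro ⟨h1, h2⟩
  have key : ∀ w : Fin (m+2), w ≠ π (Fin.last _) → π.symm w < Fin.last _ := by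
    intro w hw
    apply lt_of_le_of_ne (Fin.le_last _)
    intro h
    apply hw
    rw [← h]; simp
  by_cases h : (π (Fin.last _) : ℕ) = 0
  · apply h2
    refine ⟨π.symm 1, key _ ?_, by simp [h]⟩
    intro e; rw [← e] at h; simp at h
  · apply h1
    have := (π (Fin.last _)).isLt
    refine ⟨π.symm ⟨(π (Fin.last _) : ℕ) - 1, by omega⟩, key _ ?_, by simp; omega⟩
    intro e
    have := congrArg Fin.val e
    simp at this
    omega

/-- Position `i` becomes a new kink when `p` is appended. -/
def KNew {n : ℕ} (π : Equiv.Perm (Fin n)) (p : Fin (n+1)) (i : Fin n) : Prop :=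
  (KL π i ∧ ¬ KR π i ∧ (p : ℕ) = π i) ∨ (KR π i ∧ ¬ KL π i ∧ (p : ℕ) = π i + 1)

theorem numKinks_kins {m : ℕ} (p : Fin (m+2)) (π : Equiv.Perm (Fin (m+1))) :
    numKinks (kins p π) = numKinks π + ∑ i : Fin (m+1), if KNew π p i then 1 else 0 := by
  have h := numKinks_succ (kins p π)
  have h' := numKinks_succ π
  rw [Fin.sum_univ_castSucc, if_neg (last_not_kink _), add_zero] at h
  have : ∀ i : Fin (m+1), (if ¬ KL (kins p π) i.castSucc ∧ ¬ KR (kins p π) i.castSucc then 1 else 0)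
      = (if ¬ KL π i ∧ ¬ KR π i then 1 else 0) + (if KNew π p i then 1 else 0) := by
    intro i
    rw [KL_kins, KR_kins]
    unfold KNew
    by_cases a : KL π i <;> by_cases b : KR π i <;> by_cases c : (p : ℕ) = π i <;>
      by_cases d : (p : ℕ) = π i + 1 <;> simp [a, b, c, d]
  rw [Finset.sum_congr rfl (fun i _ => this i), Finset.sum_add_distrib, ← h'] at h
  omega

theorem KNew_unique {n : ℕ} (π : Equiv.Perm (Fin n)) (p : Fin (n+1)) (i k : Fin n)
    (hi : KNew π p i) (hk : KNew π p k) : i = k := by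
  have aux : ∀ i k : Fin n, KL π i → KR π k → (π i : ℕ) = π k + 1 → False := by
    rintro i k ⟨j, hj, e⟩ ⟨l, hl, e'⟩ h
    have h1 : j = k := π.injective (Fin.ext (by omega))
    have h2 : l = i := π.injective (Fin.ext (by omega))
    subst h1 h2
    exact lt_asymm hj hl
  rcases hi with ⟨a, b, c⟩ | ⟨a, b, c⟩ <;> rcases hk with ⟨a', b', c'⟩ | ⟨a', b', c'⟩
  · exact π.injective (Fin.ext (by omega))
  · exact (aux i k a a' (by omega)).elim
  · exact (aux k i a' a (by omega)).elim
  · exact π.injective (Fin.ext (by omega))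

theorem newCount_le {n : ℕ} (π : Equiv.Perm (Fin n)) (p : Fin (n+1)) :
    (∑ i : Fin n, if KNew π p i then 1 else 0) ≤ 1 := by
  rw [← Finset.card_filter, Finset.card_le_one]
  intro a ha b hb
  simp at ha hb
  exact KNew_unique π p a b ha hb

theorem newTotal {m : ℕ} (π : Equiv.Perm (Fin (m+1))) :
    (∑ p : Fin (m+2), ∑ i : Fin (m+1), if KNew π p i then 1 else 0) + 2 * numKinks π = m := by
  rw [Finset.sum_comm]
  have h1 : ∀ i : Fin (m+1), (∑ p : Fin (m+2), if KNew π p i then 1 else 0)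
      = if (KL π i ∧ ¬ KR π i) ∨ (KR π i ∧ ¬ KL π i) then 1 else 0 := by
    intro i
    by_cases a : KL π i <;> by_cases b : KR π i
    · simp [KNew, a, b]
    · have : ∀ p : Fin (m+2), KNew π p i ↔ p = (π i).castSucc := by
        intro p; simp [KNew, a, b, Fin.ext_iff]
      simp [this, a, b]
    · have : ∀ p : Fin (m+2), KNew π p i ↔ p = (π i).succ := by
        intro p; simp [KNew, a, b, Fin.ext_iff]
      simp [this, a, b]
    · simp [KNew, a, b]
  rw [Finset.sum_congr rfl (fun i _ => h1 i)]
  have h2 := card_KL_KR π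
  have h3 := numKinks_succ π
  have h4 : ∀ i : Fin (m+1), (if (KL π i ∧ ¬ KR π i) ∨ (KR π i ∧ ¬ KL π i) then 1 else 0)
      + 2 * (if ¬ KL π i ∧ ¬ KR π i then 1 else 0)
      + ((if KL π i then 1 else 0) + (if KR π i then 1 else 0)) = 2 := by
    intro i
    by_cases a : KL π i <;> by_cases b : KR π i <;> simp [a, b]
  have h5 := Finset.sum_congr (rfl : (Finset.univ : Finset (Fin (m+1))) = _) (fun i _ => h4 i)
  rw [Finset.sum_add_distrib, Finset.sum_add_distrib, ← Finset.mul_sum, Finset.sum_add_distrib, ← h3,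
    h2] at h5
  simp only [Finset.sum_const, Finset.card_univ, Fintype.card_fin, smul_eq_mul] at h5
  omega

theorem two_numKinks_le {m : ℕ} (π : Equiv.Perm (Fin (m+1))) : 2 * numKinks π ≤ m := by
  have := newTotal π; omega

theorem count_p {m : ℕ} (π : Equiv.Perm (Fin (m+1))) (d : ℕ) :
    (∑ p : Fin (m+2), if numKinks (kins p π) = d then 1 else 0)
      = (if numKinks π = d then 2 * d + 2 else 0) + (if numKinks π + 1 = d then m - 2 * (d - 1) else 0) := by
  have h := newTotal π
  set k := numKinks π with hk
  by_cases a : k = d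
  · have e : ∀ p : Fin (m+2), (if numKinks (kins p π) = d then 1 else 0)
        + (∑ i : Fin (m+1), if KNew π p i then 1 else 0) = 1 := by
      intro p
      have := newCount_le π p
      rw [numKinks_kins, ← hk]
      split_ifs <;> omega
    have e' := Finset.sum_congr (rfl : (Finset.univ : Finset (Fin (m+2))) = _) (fun p _ => e p)
    rw [Finset.sum_add_distrib] at e'
    rw [if_pos a, if_neg (by omega)]
    simp only [Finset.sum_const, Finset.card_univ, Fintype.card_fin, smul_eq_mul, mul_one] at e'
    omega
  · by_cases b : k + 1 = d
    · have e : ∀ p : Fin (m+2), (if numKinks (kins p π) = d then 1 else 0)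
          = (∑ i : Fin (m+1), if KNew π p i then 1 else 0) := by
        intro p
        have := newCount_le π p
        rw [numKinks_kins, ← hk]
        split_ifs <;> omega
      rw [Finset.sum_congr rfl (fun p _ => e p), if_neg a, if_pos b]
      omega
    · rw [if_neg a, if_neg b]
      apply Finset.sum_eq_zero
      intro p _
      have := newCount_le π p
      rw [numKinks_kins, ← hk, if_neg]
      omega

theorem F_sum (n d : ℕ) : F n d = ∑ π : Equiv.Perm (Fin n), if numKinks π = d then 1 else 0 := by
  rw [F, Finset.card_filter]

theorem F_rec_aux (m d : ℕ) : F (m+2) d = ∑ π : Equiv.Perm (Fin (m+1)),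
    ((if numKinks π = d then 2 * d + 2 else 0)
      + (if numKinks π + 1 = d then m - 2 * (d - 1) else 0)) := by
  rw [F_sum, ← (kins_bij (m+1)).sum_comp, Fintype.sum_prod_type, Finset.sum_comm]
  exact Finset.sum_congr rfl (fun π _ => count_p π d)

theorem F_rec_zero (m : ℕ) : F (m+2) 0 = 2 * F (m+1) 0 := by
  rw [F_rec_aux, F_sum, Finset.mul_sum]
  apply Finset.sum_congr rfl
  intro π _
  simp

theorem F_rec_succ (m d : ℕ) :
    F (m+2) (d+1) = 2 * (d+2) * F (m+1) (d+1) + (m - 2 * d) * F (m+1) d := by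
  rw [F_rec_aux, F_sum, F_sum, Finset.mul_sum, Finset.mul_sum, ← Finset.sum_add_distrib]
  apply Finset.sum_congr rfl
  intro π _
  simp only [mul_ite, mul_one, mul_zero, add_left_inj, Nat.add_sub_cancel]
  congr 2

theorem F_one (d : ℕ) : F 1 d = if d = 0 then 1 else 0 := by
  have : ∀ π : Equiv.Perm (Fin 1), numKinks π = 0 := by
    intro π
    have := two_numKinks_le π
    omega
  rw [F_sum]
  simp [this, eq_comm]

def kg : ℕ → ℕ → ℕ
  | 0, 0 => 1
  | 0, _ + 1 => 0
  | m + 1, 0 => kg m 0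
  | m + 1, d + 1 => (d + 2) * kg m (d + 1) + 2 * (m - 2 * d) * kg m d

theorem kg_vanish (m : ℕ) : ∀ d, m < 2 * d → kg m d = 0 := by
  induction m with
  | zero => intro d hd; cases d with
    | zero => omega
    | succ d => simp [kg]
  | succ m ih => intro d hd; cases d with
    | zero => omega
    | succ d => simp [kg, ih (d+1) (by omega), show m - 2 * d = 0 by omega]

open PowerSeries in
theorem kE_mul : (PowerSeries.mk (fun _ => (1:ℝ))) * (1 - X) = 1 := by
  exact PowerSeries.mk_one_mul_one_sub_eq_one ℝ

/-- the geometric series -/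
noncomputable def kE : PowerSeries ℝ := PowerSeries.mk (fun _ => (1:ℝ))

open PowerSeries in
theorem kE_mul' : kE * (1 - X) = 1 := kE_mul

open PowerSeries in
theorem deriv_kE : derivative ℝ kE = kE ^ 2 := by
  have h := congrArg (derivative ℝ) kE_mul'
  rw [Derivation.leibniz] at h
  simp at h
  have h2 := kE_mul'
  linear_combination kE * h - (derivative ℝ kE + 0) * h2

open PowerSeries in
theorem deriv_term (d a : ℕ) :
    derivative ℝ (X * (X ^ d * (1 + X) ^ a * kE ^ (a + 2 * d + 2)))
      = ((d + 1 : ℕ) : PowerSeries ℝ) * (X ^ d * (1 + X) ^ (a + 1) * kE ^ (a + 2 * d + 3))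
        + ((2 * a : ℕ) : PowerSeries ℝ) * (X ^ (d+1) * (1 + X) ^ (a - 1) * kE ^ (a + 2 * d + 3)) := by
  have h2 := kE_mul'
  have e : X * (X ^ d * (1 + X) ^ a * kE ^ (a + 2 * d + 2)) 
      = X ^ (d+1) * ((1 + X) ^ a * kE ^ (a + 2 * d + 2)) := by ring
  rw [e]
  simp only [Derivation.leibniz, Derivation.leibniz_pow, deriv_kE, map_add, derivative_X, smul_eq_mul, nsmul_eq_mul, Derivation.map_one_eq_zero]
  rcases a with _ | a
  · simp
    have : kE ^ (2 * d + 2) = kE ^ (2*d+3) * (1 - X) := by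
      rw [pow_succ _ (2*d+2), mul_assoc, h2, mul_one]
    have h3 : kE ^ (2*d+1) * kE^2 = kE ^ (2*d+3) := by ring
    rw [h3, this]
    ring
  · simp only [Nat.add_sub_cancel]
    have : kE ^ (a + 1 + 2 * d + 2) = kE ^ (a+1+2*d+3) * (1 - X) := by
      rw [pow_succ _ (a+1+2*d+2), mul_assoc, h2, mul_one]
    have h3 : kE ^ (a + 1+ 2*d+2-1) * kE^2 = kE ^ (a+1+2*d+3) := by
      rw [← pow_add]; congr 1
    rw [h3, this]
    push_cast
    ring

open PowerSeries in
noncomputable def kS (m : ℕ) : PowerSeries ℝ :=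
  ∑ d ∈ Finset.range (m+1), (kg m d : PowerSeries ℝ) * (X ^ d * (1 + X) ^ (m - 2 * d) * kE ^ (m + 2))

open PowerSeries in
theorem kS_succ (m : ℕ) : kS (m+1) = derivative ℝ (X * kS m) := by
  have hd : ∀ d : ℕ, derivative ℝ (X * ((kg m d : PowerSeries ℝ) * (X ^ d * (1 + X) ^ (m - 2 * d) * kE ^ (m + 2))))
      = ((d+1 : ℕ) : PowerSeries ℝ) * (kg m d : PowerSeries ℝ) * (X ^ d * (1 + X) ^ (m + 1 - 2 * d) * kE ^ (m + 3))
       + ((2 * (m - 2 * d) : ℕ) : PowerSeries ℝ) * (kg m d : PowerSeries ℝ) * (X ^ (d+1) * (1 + X) ^ (m + 1 - 2 * (d + 1)) * kE ^ (m + 3)) := by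
    intro d
    by_cases h : m < 2 * d
    · simp [kg_vanish m d h]
    · obtain ⟨a, rfl⟩ : ∃ a, m = a + 2 * d := ⟨m - 2 * d, by omega⟩
      have := deriv_term d a
      rw [mul_left_comm, Derivation.leibniz]
      simp only [Derivation.map_natCast, smul_zero, add_zero, smul_eq_mul]
      rw [show a + 2 * d - 2 * d = a by omega, this, show a + 2 * d + 1 - 2 * d = a + 1 by omega,
        show a + 2 * d + 1 - 2 * (d+1) = a - 1 by omega]
      ring
  rw [kS, kS, Finset.mul_sum, map_sum, Finset.sum_congr rfl (fun d _ => hd d), Finset.sum_add_distrib,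
    Finset.sum_range_succ']
  have e : ∑ d ∈ Finset.range (m+1), ((d+1 : ℕ) : PowerSeries ℝ) * (kg m d : PowerSeries ℝ) * (X ^ d * (1 + X) ^ (m + 1 - 2 * d) * kE ^ (m + 3))
     = ∑ d ∈ Finset.range (m+2), ((d+1 : ℕ) : PowerSeries ℝ) * (kg m d : PowerSeries ℝ) * (X ^ d * (1 + X) ^ (m + 1 - 2 * d) * kE ^ (m + 3)) := by
    rw [Finset.sum_range_succ _ (m+1), kg_vanish m (m+1) (by omega)]
    simp
  rw [e, Finset.sum_range_succ' _ (m+1), add_right_comm (Finset.sum _ _), ← Finset.sum_add_distrib]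
  congr 1
  · apply Finset.sum_congr rfl
    intro d _
    simp only [kg]
    push_cast
    ring
  · simp [kg]

open PowerSeries in
theorem coeff_kS (m j : ℕ) : coeff j (kS m) = ((j : ℝ) + 1) ^ (m + 1) := by
  induction m with
  | zero =>
    have : kS 0 = derivative ℝ kE := by
      rw [deriv_kE]; simp [kS, kg]
    rw [this, coeff_derivative]
    simp [kE]
  | succ m ih =>
    rw [kS_succ, coeff_derivative, coeff_succ_X_mul, ih]
    ring

open PowerSeries in
theorem coeff_bound (a b : ℕ) (m : ℕ) : 
    0 ≤ coeff m ((1 + X) ^ a * kE ^ b) ∧ coeff m ((1 + X) ^ a * kE ^ b) ≤ ((a : ℝ) + b) ^ m := by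
  have base : ∀ b m : ℕ, 0 ≤ coeff m (kE ^ b) ∧ coeff m (kE ^ b) ≤ (b : ℝ) ^ m := by
    intro b
    induction b with
    | zero => intro m; simp [coeff_one]; cases m <;> simp
    | succ b ih =>
      intro m
      induction m with
      | zero => simp [kE]
      | succ m ihm =>
        have h : kE ^ (b+1) = kE ^ b + X * kE ^ (b+1) := by
          linear_combination kE ^ b * kE_mul'
        rw [h, map_add, coeff_succ_X_mul]
        have h1 := ih (m+1)
        refine ⟨by linarith [h1.1, ihm.1], ?_⟩
        have h2 : (b:ℝ)^(m+1) ≤ b * ((b+1:ℕ):ℝ)^m := by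
          rw [pow_succ']
          gcongr; simp
        calc _ ≤ (b:ℝ) * ((b+1:ℕ):ℝ)^m + ((b+1:ℕ):ℝ)^m := by linarith [h1.2, ihm.2]
          _ = _ := by push_cast; ring
  induction a generalizing m with
  | zero => simpa using base b m
  | succ a ih =>
    have h : (1 + X : PowerSeries ℝ) ^ (a+1) * kE ^ b = (1 + X) ^ a * kE ^ b + X * ((1 + X) ^ a * kE ^ b) := by
      ring
    rw [h, map_add]
    cases m with
    | zero => have := ih 0; simp [kE]
    | succ m =>
      rw [coeff_succ_X_mul]
      have h1 := ih (m+1)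
      have h2 := ih m
      refine ⟨by linarith [h1.1, h2.1], ?_⟩
      calc _ ≤ ((a:ℝ)+b)^(m+1) + (a+b)^m := add_le_add h1.2 h2.2
        _ = ((a:ℝ)+b + 1) * (a+b)^m := by ring
        _ ≤ ((a:ℝ)+b + 1) * (a+b+1)^m := by gcongr ?_ * ?_ ^ m; linarith
        _ = _ := by push_cast; ring

open PowerSeries in
noncomputable def kc (m e d : ℕ) : ℝ := coeff e ((1 + X) ^ (m - 2 * d) * kE ^ (m + 2))

open PowerSeries in
theorem kg_identity (m j : ℕ) (h : j ≤ m) :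
    (kg m j : ℝ) = ((j : ℝ) + 1) ^ (m + 1) - ∑ d ∈ Finset.range j, kg m d * kc m (j - d) d := by
  have key := coeff_kS m j
  rw [kS, map_sum] at key
  have hc : ∀ d, coeff j ((kg m d : PowerSeries ℝ) * (X ^ d * (1 + X) ^ (m - 2 * d) * kE ^ (m + 2)))
      = if d ≤ j then kg m d * kc m (j - d) d else 0 := by
    intro d
    have : ((kg m d : PowerSeries ℝ) * (X ^ d * (1 + X) ^ (m - 2 * d) * kE ^ (m + 2)))
       = C (kg m d : ℝ) * (X ^ d * ((1 + X) ^ (m - 2 * d) * kE ^ (m + 2))) := by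
      rw [map_natCast]; ring
    rw [this, coeff_C_mul, coeff_X_pow_mul']
    split_ifs
    · rfl
    · simp
  rw [Finset.sum_congr rfl (fun d _ => hc d)] at key
  have : ∑ d ∈ Finset.range (m+1), (if d ≤ j then kg m d * kc m (j - d) d else 0)
      = ∑ d ∈ Finset.range (j+1), kg m d * kc m (j - d) d := by
    rw [← Finset.sum_filter]
    apply Finset.sum_congr _ (fun _ _ => rfl)
    ext d; simp; omega
  rw [this, Finset.sum_range_succ] at key
  have h0 : kc m (j - j) j = 1 := by simp [kc, kE]
  rw [h0] at key
  linarith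

theorem kc_tendsto (j d e : ℕ) (h : d < j) :
    Filter.Tendsto (fun m : ℕ => kc m e d * (((d:ℝ)+1)/((j:ℝ)+1)) ^ (m+1)) Filter.atTop (nhds 0) := by
  set r : ℝ := ((d:ℝ)+1)/((j:ℝ)+1) with hr
  have hj : (0:ℝ) < (j:ℝ)+1 := by positivity
  have r0 : 0 < r := by positivity
  have r1 : r < 1 := by
    rw [hr, div_lt_one hj]
    have : (d:ℝ) < j := by exact_mod_cast h
    linarith
  have t : Filter.Tendsto (fun m : ℕ => (2:ℝ)^e * (((m+1:ℕ):ℝ)^e * r^(m+1))) Filter.atTop (nhds 0) := by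
    have := (tendsto_pow_const_mul_const_pow_of_lt_one e r0.le r1).comp (Filter.tendsto_add_atTop_nat 1)
    simpa using this.const_mul ((2:ℝ)^e)
  refine squeeze_zero (fun m => ?_) (fun m => ?_) t
  · exact mul_nonneg (coeff_bound _ _ _).1 (by positivity)
  · have hb := (coeff_bound (m - 2*d) (m+2) e).2
    have h1 : (((m - 2 * d : ℕ) : ℝ) + ((m+2:ℕ):ℝ)) ≤ 2 * ((m+1:ℕ):ℝ) := by
      have : (m - 2*d) + (m+2) ≤ 2 * (m+1) := by omega
      exact_mod_cast this
    calc kc m e d * r^(m+1) ≤ (2 * ((m+1:ℕ):ℝ))^e * r^(m+1) := by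
          gcongr
          exact hb.trans (by gcongr)
      _ = _ := by rw [mul_pow]; ring

theorem kg_tendsto (j : ℕ) :
    Filter.Tendsto (fun m : ℕ => (kg m j : ℝ) / ((j:ℝ)+1) ^ (m+1)) Filter.atTop (nhds 1) := by
  induction j using Nat.strong_induction_on with
  | _ j ih =>
    have hj : (0:ℝ) < (j:ℝ)+1 := by positivity
    have t : Filter.Tendsto (fun m : ℕ => 1 - ∑ d ∈ Finset.range j,
        ((kg m d : ℝ) / ((d:ℝ)+1) ^ (m+1)) * (kc m (j-d) d * (((d:ℝ)+1)/((j:ℝ)+1)) ^ (m+1)))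
        Filter.atTop (nhds (1 - ∑ d ∈ Finset.range j, (1:ℝ) * 0)) := by
      refine Filter.Tendsto.const_sub _ (tendsto_finsetSum _ fun d hd => ?_)
      have hd' := Finset.mem_range.1 hd
      exact (ih d hd').mul (kc_tendsto j d (j-d) hd')
    simp only [mul_zero, Finset.sum_const_zero, sub_zero] at t
    refine t.congr' ?_
    filter_upwards [Filter.eventually_ge_atTop j] with m hm
    rw [kg_identity m j hm, sub_div, div_self (by positivity), Finset.sum_div]
    congr 1
    apply Finset.sum_congr rfl
    intro d _
    rw [div_pow]
    field_simp

theorem F_eq_kg (m : ℕ) : ∀ d, F (m+1) d * 2 ^ (2 * d) = 2 ^ m * kg m d := by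
  induction m with
  | zero => intro d; rw [F_one]; cases d <;> simp [kg]
  | succ m ih =>
    intro d
    cases d with
    | zero =>
      have := ih 0
      rw [F_rec_zero, kg]
      rw [pow_succ]
      linarith
    | succ d =>
      have h1 := ih (d+1)
      have h2 := ih d
      rw [F_rec_succ, kg]
      calc _ = 2 * (d+2) * (F (m+1) (d+1) * 2 ^ (2 * (d+1))) + 4 * (m - 2 * d) * (F (m+1) d * 2 ^ (2 * d)) := by
            ring
        _ = _ := by rw [h1, h2]; ring

theorem F_asymptotics (d : ℕ) :
    Filter.Tendsto
      (fun n : ℕ => (F n d : ℝ) / ((2 : ℝ) ^ ((n : ℤ) - 2 * d - 1) * ((d : ℝ) + 1) ^ n))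
      Filter.atTop (nhds 1) := by
  rw [← Filter.tendsto_add_atTop_iff_nat 1]
  refine (kg_tendsto d).congr fun m => ?_
  have h : (F (m+1) d : ℝ) * 2 ^ (2 * d) = 2 ^ m * kg m d := by exact_mod_cast F_eq_kg m d
  have e : (2:ℝ) ^ (((m+1 : ℕ) : ℤ) - 2 * d - 1) = 2 ^ m / 2 ^ (2 * d) := by
    rw [show (((m+1 : ℕ) : ℤ) - 2 * d - 1) = (m : ℤ) - ((2 * d : ℕ) : ℤ) by push_cast; ring,
      zpow_sub₀ (by norm_num), zpow_natCast, zpow_natCast]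
  rw [e]
  have hd : (0:ℝ) < (d:ℝ)+1 := by positivity
  rw [div_eq_div_iff (by positivity) (by positivity)]
  field_simp
  linarith
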